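/- Every 𝒦-set E ⊆ 𝕋 is an 𝓛₂-set; that is, if there is c_E > 0 such that every arc I ⊆ 𝕋 satisfies sup_{ζ∈I} dist(ζ,E) ≥ c_E |I|, then there is C > 0 such that ∫_{Γ(ζ,E)} log²(dist(ζ,E)/dist(ζ',E)) |dζ'|/|ζ−ζ'|² ≤ C/dist(ζ,E) for all ζ ∈ 𝕋∖E. -/

import Mathlib

open MeasureTheory Real Set

noncomputable section

/-- The unit circle in `ℂ`. -/
def circleT : Set ℂ := Metric.sphere (0 : ℂ) 1

/-- Arc-length parametrization of the unit circle. -/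
def cpt (θ : ℝ) : ℂ := Complex.exp (θ * Complex.I)

/-- Distance from a point to a set. -/
def dE (E : Set ℂ) (ζ : ℂ) : ℝ := Metric.infDist ζ E

/-- Arc-length integral over the whole circle. -/
def circInt (f : ℂ → ℝ) : ℝ := ∫ θ in Set.Ioc 0 (2 * π), f (cpt θ)

/-- Arc-length integral over a subset `Λ` of the circle. -/
def circIntOn (Λ : Set ℂ) (f : ℂ → ℝ) : ℝ :=
  ∫ θ in {θ ∈ Set.Ioc 0 (2 * π) | cpt θ ∈ Λ}, f (cpt θ)

/-- `E` has arc-length (Lebesgue) measure zero. -/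
def MeasureZeroOnCircle (E : Set ℂ) : Prop :=
  volume {θ ∈ Set.Ioc 0 (2 * π) | cpt θ ∈ E} = 0

/-- `E` is a Carleson set: `∫_𝕋 log dist(ζ,E) |dζ| > -∞`. -/
def CarlesonSet (E : Set ℂ) : Prop :=
  IntegrableOn (fun θ => Real.log (dE E (cpt θ))) (Set.Ioc 0 (2 * π)) volume

/-- `I(ζ,E)`: the connected component of `𝕋 \ E` containing `ζ`. -/
def compArc (E : Set ℂ) (ζ : ℂ) : Set ℂ := connectedComponentIn (circleT \ E) ζ

/-- `Γ(ζ,E)`. -/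
def GammaSet (E : Set ℂ) (ζ : ℂ) : Set ℂ :=
  {ζ' ∈ circleT \ compArc E ζ | dE E ζ' ≤ dE E ζ}

/-- `Σ(ζ,E)`. -/
def SigmaSet (E : Set ℂ) (ζ : ℂ) : Set ℂ :=
  {ζ' ∈ circleT \ compArc E ζ | dE E ζ ≤ dE E ζ'}

/-- The Richter–Sundberg integrand for the outer function with boundary modulus
`ω(dist(·,E))`. -/
def RSker (ω : ℝ → ℝ) (E : Set ℂ) (ζ ζ' : ℂ) : ℝ :=
  ((ω (dE E ζ')) ^ 2 - (ω (dE E ζ)) ^ 2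
    - 2 * (ω (dE E ζ)) ^ 2 * Real.log (ω (dE E ζ') / ω (dE E ζ))) / ‖ζ - ζ'‖ ^ 2

/-- Local Dirichlet integral `D_ζ(f_{ω,E})` (Richter–Sundberg formula). -/
def locDir (ω : ℝ → ℝ) (E : Set ℂ) (ζ : ℂ) : ℝ :=
  (1 / (2 * π)) * circInt (fun ζ' => RSker ω E ζ ζ')

/-- Local Dirichlet integral restricted to `Λ`. -/
def locDirOn (ω : ℝ → ℝ) (E : Set ℂ) (Λ : Set ℂ) (ζ : ℂ) : ℝ :=
  (1 / (2 * π)) * circIntOn Λ (fun ζ' => RSker ω E ζ ζ')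

/-- `E` is an `𝓛₁`-set. -/
def L1Set (E : Set ℂ) : Prop :=
  ∃ C > 0, ∀ ζ ∈ circleT \ E,
    circIntOn (GammaSet E ζ)
      (fun ζ' => Real.log (dE E ζ / dE E ζ') / ‖ζ - ζ'‖ ^ 2) ≤ C / dE E ζ

/-- The `𝓛₂` inequality with constant `C`. -/
def L2With (E : Set ℂ) (C : ℝ) : Prop :=
  ∀ ζ ∈ circleT \ E,
    circIntOn (GammaSet E ζ)
      (fun ζ' => (Real.log (dE E ζ / dE E ζ')) ^ 2 / ‖ζ - ζ'‖ ^ 2) ≤ C / dE E ζ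

/-- `E` is an `𝓛₂`-set. -/
def L2Set (E : Set ℂ) : Prop := ∃ C > 0, L2With E C

/-- Supremum of `dist(·,E)` over the arc `cpt '' (a,b]`. -/
def arcSup (E : Set ℂ) (a b : ℝ) : ℝ := sSup ((fun θ => dE E (cpt θ)) '' Set.Ioc a b)

/-- `E` is a `𝒦`-set (Kotochigov). -/
def KSet (E : Set ℂ) : Prop :=
  ∃ c > 0, ∀ a b : ℝ, a < b → b ≤ a + 2 * π → c * (b - a) ≤ arcSup E a b

/-- Integral of a weight over the arc `cpt '' (a,b]` (with respect to arc length). -/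
def arcInt (w : ℂ → ℝ) (a b : ℝ) : ℝ := ∫ θ in Set.Ioc a b, w (cpt θ)

/-- Double logarithmic integral of a weight over an arc. -/
def arcDouble (w : ℂ → ℝ) (a b : ℝ) : ℝ :=
  ∫ θ in Set.Ioc a b, (∫ θ' in Set.Ioc a b,
    Real.log (1 / ‖cpt θ - cpt θ'‖) * w (cpt θ) * w (cpt θ'))

/-- Arc-length measure of `{ζ ∈ I : dist(ζ,E) ≤ t}` for the arc `cpt '' (a,b]`. -/
def sublevelMeas (E : Set ℂ) (a b t : ℝ) : ℝ :=
  (volume {θ ∈ Set.Ioc a b | dE E (cpt θ) ≤ t}).toReal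

/-- Arc-length measure of `E_t = {ζ ∈ 𝕋 : dist(ζ,E) ≤ t}`. -/
def EtMeas (E : Set ℂ) (t : ℝ) : ℝ := sublevelMeas E 0 (2 * π) t

/-- The open unit disc. -/
def unitDisc : Set ℂ := Metric.ball (0 : ℂ) 1

/-- Membership in the (holomorphic) Dirichlet space `𝒟`. -/
def MemDirichlet (f : ℂ → ℂ) : Prop :=
  DifferentiableOn ℂ f unitDisc ∧
  (∃ M : ℝ, ∀ r ∈ Set.Ioo (0 : ℝ) 1,
    (∫ θ in Set.Ioc 0 (2 * π), ‖f ((r : ℂ) * cpt θ)‖ ^ 2) ≤ M) ∧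
  IntegrableOn (fun z => ‖deriv f z‖ ^ 2) unitDisc volume

/-- `f` is a multiplier of the Dirichlet space `𝒟`. -/
def IsMultiplierD (f : ℂ → ℂ) : Prop :=
  ∀ g : ℂ → ℂ, MemDirichlet g → MemDirichlet (fun z => f z * g z)

/-- The outer function `f_{ω,E}` with boundary modulus `ω(dist(·,E))`. -/
def outerFun (ω : ℝ → ℝ) (E : Set ℂ) (z : ℂ) : ℂ :=
  Complex.exp ((((2 * π)⁻¹ : ℝ) : ℂ) * ∫ θ in Set.Ioc 0 (2 * π),
    ((cpt θ + z) / (cpt θ - z)) * ((Real.log (ω (dE E (cpt θ))) : ℝ) : ℂ))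

/-- `log ω(dist(·,E)) ∈ L¹(𝕋)`. -/
def LogOmegaInt (ω : ℝ → ℝ) (E : Set ℂ) : Prop :=
  IntegrableOn (fun θ => Real.log (ω (dE E (cpt θ)))) (Set.Ioc 0 (2 * π)) volume

/-- Standing hypotheses on `ω` (with derivative `ω'`): continuous, positive, increasing on
`(0,π]`, differentiable with derivative `ω'`, `t ↦ ω(t^γ)` concave, and `t ↦ tω'(t)/ω(t)`
increasing. -/
def OmegaHyp (ω ω' : ℝ → ℝ) (γ : ℝ) : Prop :=
  ContinuousOn ω (Set.Ioc 0 π) ∧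
  (∀ t ∈ Set.Ioc (0 : ℝ) π, 0 < ω t) ∧
  MonotoneOn ω (Set.Ioc 0 π) ∧
  (∀ t ∈ Set.Ioo (0 : ℝ) π, HasDerivAt ω (ω' t) t) ∧
  ConcaveOn ℝ (Set.Ioc 0 (π ^ γ⁻¹)) (fun t => ω (t ^ γ)) ∧
  MonotoneOn (fun t => t * ω' t / ω t) (Set.Ioo 0 π)

/-- The generalized Cantor set `E_{(ζ_n)}` (with `ξ k` playing the role of `ζ_{k+1}`). -/
def gCantorSet (ξ : ℕ → ℝ) : Set ℂ :=
  {z | ∃ ε : ℕ → Bool, z = Complex.exp (((2 * π : ℝ) : ℂ) * Complex.I *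
    ((∑' n : ℕ, (if ε n then (1 : ℝ) else 0) * (∏ k ∈ Finset.range n, ξ k) * (1 - ξ n) : ℝ) : ℂ))}

end

/-!
Read on the line through `θ ↦ exp (iθ)`, the function `h = dist(·, E)` is `1`-Lipschitz and the
`𝒦`-condition says that every interval of length `l` contains a point where `h ≥ c l`. Cut such an
interval into `N > 2 / c` equal pieces: on the piece containing that point `h > c l / 2`, so at most
`N - 1` pieces meet `{h ≤ c l / 2}`. Iterating over the scales `l N⁻ᵏ` gives
`|{θ ∈ I : h ≤ t}| ≤ A (t / |I|) ^ β |I|` for some `β > 0`, and slicing `{h ≤ l}` into the sets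
where `h / l ≈ e⁻ᵏ` bounds the integral of any power of `log (l / h)` over an interval of length `l`
by a multiple of `l`.

Let `d = dist(ζ, E)` and `ζ = exp (iφ)`. The arc of radius `d` about `ζ` lies in the component of
`ζ`, so `Γ(ζ, E)` lives at `|θ - φ| ≥ d`. Summing the local bound with `l = d` over intervals at
distance `n d` from `φ`, against the weight `(n d)⁻²`, gives a total of order `d · d⁻² = 1 / d`.
-/

section Porosity

/-- A function `h` on the line, typically the distance to a set, is porous with constant `c` up to
scale `L` if every interval of length `l ≤ L` contains a point where `h` is at least `c * l`.
This is the defining condition of `𝒦`-sets, read on the line. -/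
def PorousUpTo (h : ℝ → ℝ) (c L : ℝ) : Prop :=
  ∀ a l, 0 < l → l ≤ L → ∃ θ ∈ Icc a (a + l), c * l ≤ h θ

lemma exists_mem_Icc_add_mul {a s θ : ℝ} {N : ℕ} (hN : N ≠ 0) (hθ : θ ∈ Icc a (a + N * s)) :
    ∃ i ∈ Finset.range N, θ ∈ Icc (a + i * s) (a + i * s + s) := by
  induction N, Nat.one_le_iff_ne_zero.2 hN using Nat.le_induction with
  | base => exact ⟨0, by simp, by simpa using hθ⟩
  | succ N hN₁ ih =>
    rcases le_total θ (a + N * s) with hle | hge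
    · obtain ⟨i, hi, hθi⟩ := ih (by omega) ⟨hθ.1, hle⟩
      exact ⟨i, Finset.mem_range.2 ((Finset.mem_range.1 hi).trans (Nat.lt_succ_self N)), hθi⟩
    · refine ⟨N, by simp, hge, hθ.2.trans_eq ?_⟩
      push_cast
      ring

variable {h : ℝ → ℝ} {c L : ℝ}

/- The interval of the subdivision that contains a point where `h ≥ c * l` is too short to meet the
sublevel set. -/
lemma PorousUpTo.volume_sublevel_le_of_subdivision (hpor : PorousUpTo h c L)
    (hlip : LipschitzWith 1 h) {N : ℕ} (hcN : 2 < c * N) {a l t B : ℝ} (hl : 0 < l)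
    (hlL : l ≤ L) (ht : t ≤ c / 2 * l)
    (hB : ∀ b, volume (Icc b (b + l / N) ∩ {θ | h θ ≤ t}) ≤ ENNReal.ofReal B) :
    volume (Icc a (a + l) ∩ {θ | h θ ≤ t}) ≤ ENNReal.ofReal ((N - 1) * B) := by
  have hN : N ≠ 0 := by rintro rfl; norm_num at hcN
  have hN₀ : (0 : ℝ) < N := by exact_mod_cast Nat.pos_of_ne_zero hN
  set s := l / N
  have hs : N * s = l := mul_div_cancel₀ l hN₀.ne'
  obtain ⟨θ₀, hθ₀, hhθ₀⟩ := hpor a l hl hlL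
  obtain ⟨i₀, hi₀, hθ₀i₀⟩ := exists_mem_Icc_add_mul hN (by rwa [hs] : θ₀ ∈ Icc a (a + N * s))
  have hdisj : ∀ θ ∈ Icc (a + i₀ * s) (a + i₀ * s + s), t < h θ := by
    intro θ hθ
    have hhθ : h θ₀ ≤ h θ + dist θ₀ θ := by simpa using hlip.le_add_mul θ₀ θ
    have hdist : dist θ₀ θ ≤ s := by simpa using Real.dist_le_of_mem_Icc hθ₀i₀ hθ
    have hs_lt : s < c / 2 * l := by
      rw [div_lt_iff₀ hN₀]
      nlinarith
    linarith
  have hcover : Icc a (a + l) ∩ {θ | h θ ≤ t} ⊆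
      ⋃ i ∈ (Finset.range N).erase i₀, Icc (a + i * s) (a + i * s + s) ∩ {θ | h θ ≤ t} := by
    rintro θ ⟨hθ, hle⟩
    obtain ⟨i, hi, hθi⟩ := exists_mem_Icc_add_mul hN (by rwa [hs] : θ ∈ Icc a (a + N * s))
    have hne : i ≠ i₀ := by
      rintro rfl
      exact (hdisj θ hθi).not_ge hle
    exact mem_iUnion₂.2 ⟨i, Finset.mem_erase.2 ⟨hne, hi⟩, hθi, hle⟩
  calc volume (Icc a (a + l) ∩ {θ | h θ ≤ t})
      ≤ ∑ i ∈ (Finset.range N).erase i₀,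
          volume (Icc (a + i * s) (a + i * s + s) ∩ {θ | h θ ≤ t}) :=
        (measure_mono hcover).trans (measure_biUnion_finset_le _ _)
    _ ≤ ∑ _i ∈ (Finset.range N).erase i₀, ENNReal.ofReal B :=
        Finset.sum_le_sum fun _ _ => hB _
    _ = ENNReal.ofReal ((N - 1) * B) := by
        rw [Finset.sum_const, Finset.card_erase_of_mem hi₀, Finset.card_range,
          ← ENNReal.ofReal_nsmul, nsmul_eq_mul, Nat.cast_pred (Nat.pos_of_ne_zero hN)]

lemma PorousUpTo.volume_sublevel_le_pow (hpor : PorousUpTo h c L) (hlip : LipschitzWith 1 h)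
    (hc : 0 < c) {N : ℕ} (hcN : 2 < c * N) (k : ℕ) {a l : ℝ} (hl : 0 < l) (hlL : l ≤ L) :
    volume (Icc a (a + l) ∩ {θ | h θ ≤ c / 2 * l * (N : ℝ)⁻¹ ^ k}) ≤
      ENNReal.ofReal ((1 - (N : ℝ)⁻¹) ^ k * l) := by
  have hN : 1 ≤ N := Nat.one_le_iff_ne_zero.2 (by rintro rfl; norm_num at hcN)
  have hN₁ : (1 : ℝ) ≤ N := by exact_mod_cast hN
  induction k generalizing a l with
  | zero => simpa using measure_mono (μ := volume) (inter_subset_left (s := Icc a (a + l)))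
  | succ k ih =>
    have hscale : c / 2 * l * (N : ℝ)⁻¹ ^ (k + 1) = c / 2 * (l / N) * (N : ℝ)⁻¹ ^ k := by
      rw [pow_succ]
      ring
    have hle : c / 2 * l * (N : ℝ)⁻¹ ^ (k + 1) ≤ c / 2 * l :=
      mul_le_of_le_one_right (by positivity)
        (pow_le_one₀ (by positivity) (inv_le_one_of_one_le₀ hN₁))
    refine (hpor.volume_sublevel_le_of_subdivision (B := (1 - (N : ℝ)⁻¹) ^ k * (l / N)) hlip hcN
      hl hlL hle fun b => ?_).trans_eq ?_
    · rw [hscale]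
      exact ih (by positivity) ((div_le_self hl.le hN₁).trans hlL)
    · congr 1
      rw [pow_succ]
      field_simp

lemma exists_le_pow_and_rpow_pow_le {ρ β x : ℝ} (hρ₀ : 0 < ρ) (hρ₁ : ρ < 1) (hβ : 0 ≤ β)
    (hx₀ : 0 < x) (hx₁ : x ≤ 1) : ∃ k : ℕ, x ≤ ρ ^ k ∧ (ρ ^ β) ^ k ≤ x ^ β / ρ ^ β := by
  obtain ⟨k, hk, hxk⟩ := exists_nat_pow_near_of_lt_one hx₀ hx₁ hρ₀ hρ₁
  refine ⟨k, hxk, ?_⟩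
  rw [le_div_iff₀ (by positivity), ← pow_succ, Real.rpow_pow_comm hρ₀.le]
  exact Real.rpow_le_rpow (by positivity) hk.le hβ

theorem PorousUpTo.exists_volume_sublevel_le_rpow (hpor : PorousUpTo h c L)
    (hlip : LipschitzWith 1 h) (hc : 0 < c) :
    ∃ A > (0 : ℝ), ∃ β > (0 : ℝ), ∀ a l t, 0 < l → l ≤ L → 0 < t →
      volume (Icc a (a + l) ∩ {θ | h θ ≤ t}) ≤ ENNReal.ofReal (A * (t / l) ^ β * l) := by
  obtain ⟨N, hN⟩ := exists_nat_gt (max 1 (2 / c))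
  obtain ⟨hN₁, hN₂⟩ := max_lt_iff.1 hN
  have hcN : 2 < c * N := (div_lt_iff₀' hc).1 hN₂
  set ρ : ℝ := (N : ℝ)⁻¹
  have hρ₀ : 0 < ρ := by positivity
  have hρ₁ : ρ < 1 := inv_lt_one_of_one_lt₀ hN₁
  set β : ℝ := Real.logb ρ (1 - ρ)
  have hβ : 0 < β := Real.logb_pos_of_base_lt_one hρ₀ hρ₁ (by linarith) (by linarith)
  have hρβ : ρ ^ β = 1 - ρ := Real.rpow_logb hρ₀ hρ₁.ne (by linarith)
  refine ⟨(2 / c) ^ β / (1 - ρ), div_pos (by positivity) (by linarith), β, hβ,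
    fun a l t hl hlL ht => ?_⟩
  set x : ℝ := 2 / c * (t / l)
  have hx : 0 < x := by positivity
  have htx : t = c / 2 * l * x := by simp only [x]; field_simp
  have hbound : (2 / c) ^ β / (1 - ρ) * (t / l) ^ β * l = x ^ β / (1 - ρ) * l := by
    rw [Real.mul_rpow (by positivity) (by positivity)]
    ring
  rw [hbound]
  rcases le_or_gt x 1 with hx₁ | hx₁
  · obtain ⟨k, hxk, hk⟩ := exists_le_pow_and_rpow_pow_le hρ₀ hρ₁ hβ.le hx hx₁
    rw [hρβ] at hk
    have hsub : {θ | h θ ≤ t} ⊆ {θ | h θ ≤ c / 2 * l * ρ ^ k} := fun θ hθ =>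
      hθ.trans (htx.trans_le (by gcongr))
    refine (measure_mono (inter_subset_inter_right _ hsub)).trans
      ((hpor.volume_sublevel_le_pow hlip hc hcN k hl hlL).trans (ENNReal.ofReal_le_ofReal ?_))
    gcongr
  · calc volume (Icc a (a + l) ∩ {θ | h θ ≤ t}) ≤ volume (Icc a (a + l)) :=
          measure_mono inter_subset_left
      _ = ENNReal.ofReal l := by simp
      _ ≤ ENNReal.ofReal (x ^ β / (1 - ρ) * l) := by
          refine ENNReal.ofReal_le_ofReal (le_mul_of_one_le_left hl.le ?_)
          rw [one_le_div (by linarith)]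
          linarith [Real.one_le_rpow hx₁.le hβ.le]

end Porosity

section Logarithm

lemma summable_add_one_pow_mul_geometric {R : Type*} [NormedCommRing R] [CompleteSpace R]
    (n : ℕ) {r : R} (hr : ‖r‖ < 1) :
    Summable fun k : ℕ => ((k : R) + 1) ^ n * r ^ k := by
  simp_rw [add_pow, one_pow, mul_one, Finset.sum_mul]
  refine summable_sum fun i _ => ?_
  simpa only [mul_right_comm] using
    (summable_pow_mul_geometric_of_norm_lt_one i hr).mul_right (n.choose i : R)

lemma norm_exp_neg_lt_one {β : ℝ} (hβ : 0 < β) : ‖Real.exp (-β)‖ < 1 := by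
  rw [Real.norm_of_nonneg (Real.exp_pos _).le]
  exact Real.exp_lt_one_iff.2 (neg_lt_zero.2 hβ)

/- Slicing according to the integer part of `-log u`. The slice `k` is contained in
`{u ≤ exp (-k)}`; points where `u = 0` fall into the slice `0`, since `log 0 = 0`. -/
lemma lintegral_abs_log_pow_le {α : Type*} [MeasurableSpace α] {μ : Measure α} {u : α → ℝ}
    {A β : ℝ} (hA : 0 ≤ A) (hβ : 0 < β) (n : ℕ)
    (hμ : ∀ t, 0 < t → μ {x | u x ≤ t} ≤ ENNReal.ofReal (A * t ^ β)) :
    ∫⁻ x in {x | u x ∈ Icc 0 1}, ENNReal.ofReal (|Real.log (u x)| ^ n) ∂μ ≤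
      ENNReal.ofReal (A * ∑' k : ℕ, ((k : ℝ) + 1) ^ n * Real.exp (-β) ^ k) := by
  set slice : ℕ → Set α := fun k => {x | u x ≤ Real.exp (-k) ∧ |Real.log (u x)| ≤ k + 1}
  have hcover : {x | u x ∈ Icc 0 1} ⊆ ⋃ k, slice k := by
    rintro x ⟨hx₀, hx₁⟩
    have hlog : |Real.log (u x)| = -Real.log (u x) := abs_of_nonpos (Real.log_nonpos hx₀ hx₁)
    refine mem_iUnion.2 ⟨⌊-Real.log (u x)⌋₊, ?_, hlog.trans_le (Nat.lt_floor_add_one _).le⟩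
    rcases hx₀.eq_or_lt with hzero | hpos
    · exact hzero.symm.trans_le (Real.exp_pos _).le
    · rw [← Real.log_le_iff_le_exp hpos]
      linarith [Nat.floor_le (neg_nonneg.2 (Real.log_nonpos hx₀ hx₁))]
  have hslice : ∀ k, ∫⁻ x in slice k, ENNReal.ofReal (|Real.log (u x)| ^ n) ∂μ ≤
      ENNReal.ofReal (A * (((k : ℝ) + 1) ^ n * Real.exp (-β) ^ k)) := by
    intro k
    calc ∫⁻ x in slice k, ENNReal.ofReal (|Real.log (u x)| ^ n) ∂μ
        ≤ ∫⁻ _ in slice k, ENNReal.ofReal (((k : ℝ) + 1) ^ n) ∂μ :=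
          setLIntegral_mono measurable_const fun x hx => by gcongr; exact hx.2
      _ ≤ ENNReal.ofReal (((k : ℝ) + 1) ^ n) * ENNReal.ofReal (A * Real.exp (-k) ^ β) := by
          rw [setLIntegral_const]
          gcongr
          exact (measure_mono fun x hx => hx.1).trans (hμ _ (Real.exp_pos _))
      _ = ENNReal.ofReal (A * (((k : ℝ) + 1) ^ n * Real.exp (-β) ^ k)) := by
          rw [← ENNReal.ofReal_mul (by positivity), ← Real.exp_mul, ← Real.exp_nat_mul]
          ring_nf
  calc ∫⁻ x in {x | u x ∈ Icc 0 1}, ENNReal.ofReal (|Real.log (u x)| ^ n) ∂μ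
      ≤ ∑' k, ∫⁻ x in slice k, ENNReal.ofReal (|Real.log (u x)| ^ n) ∂μ :=
        (lintegral_mono_set hcover).trans (lintegral_iUnion_le _ _)
    _ ≤ ∑' k : ℕ, ENNReal.ofReal (A * (((k : ℝ) + 1) ^ n * Real.exp (-β) ^ k)) :=
        ENNReal.tsum_le_tsum hslice
    _ = ENNReal.ofReal (A * ∑' k : ℕ, ((k : ℝ) + 1) ^ n * Real.exp (-β) ^ k) := by
        rw [← ENNReal.ofReal_tsum_of_nonneg (fun k => by positivity)
          ((summable_add_one_pow_mul_geometric n (norm_exp_neg_lt_one hβ)).mul_left A),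
          tsum_mul_left]

variable {h : ℝ → ℝ} {c L : ℝ}

lemma PorousUpTo.exists_setLIntegral_Icc_abs_log_pow_le (hpor : PorousUpTo h c L)
    (hlip : LipschitzWith 1 h) (hc : 0 < c) (h₀ : ∀ θ, 0 ≤ h θ) (n : ℕ) :
    ∃ K > 0, ∀ a l, 0 < l → l ≤ L →
      ∫⁻ θ in Icc a (a + l) ∩ {θ | h θ ≤ l}, ENNReal.ofReal (|Real.log (l / h θ)| ^ n) ≤
        ENNReal.ofReal (K * l) := by
  obtain ⟨A, hA, β, hβ, hvol⟩ := hpor.exists_volume_sublevel_le_rpow hlip hc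
  set Z : ℝ := ∑' k : ℕ, ((k : ℝ) + 1) ^ n * Real.exp (-β) ^ k
  have hZ : 0 < Z := (summable_add_one_pow_mul_geometric n
    (norm_exp_neg_lt_one hβ)).tsum_pos (fun k => by positivity) 0 (by simp)
  refine ⟨A * Z, by positivity, fun a l hl hlL => ?_⟩
  have hsub : ∀ t, 0 < t → (volume.restrict (Icc a (a + l))) {θ | h θ / l ≤ t} ≤
      ENNReal.ofReal (A * l * t ^ β) := by
    intro t ht
    rw [Measure.restrict_apply' measurableSet_Icc, inter_comm]
    simp_rw [div_le_iff₀ hl]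
    convert hvol a l (t * l) hl hlL (by positivity) using 2
    rw [mul_div_cancel_right₀ _ hl.ne']
    ring
  have hset : {θ | h θ / l ∈ Icc 0 1} = {θ | h θ ≤ l} := by
    ext θ
    simp [div_le_one hl, div_nonneg (h₀ θ) hl.le]
  have hlog : ∀ θ, |Real.log (h θ / l)| = |Real.log (l / h θ)| := fun θ => by
    rw [← inv_div, Real.log_inv, abs_neg]
  have hint := lintegral_abs_log_pow_le (by positivity : 0 ≤ A * l) hβ n hsub
  rw [hset, Measure.restrict_restrict' measurableSet_Icc, inter_comm] at hint
  simpa only [hlog, mul_right_comm] using hint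

end Logarithm

section Tail

variable {ν : Measure ℝ} {d : ℝ} {M : ENNReal}

lemma setLIntegral_shell_one_div_sq_le (hν : ∀ a, ν (Icc a (a + d)) ≤ M) (φ : ℝ) {r : ℝ}
    (hr : 0 < r) :
    ∫⁻ θ in {θ | |θ - φ| ∈ Icc r (r + d)}, ENNReal.ofReal (1 / (θ - φ) ^ 2) ∂ν ≤
      ENNReal.ofReal (2 / r ^ 2) * M := by
  have hcover : {θ | |θ - φ| ∈ Icc r (r + d)} ⊆
      Icc (φ + r) (φ + r + d) ∪ Icc (φ - r - d) (φ - r - d + d) := by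
    rintro θ ⟨hlow, hupp⟩
    rcases abs_cases (θ - φ) with ⟨habs, -⟩ | ⟨habs, -⟩ <;> rw [habs] at hlow hupp
    · exact Or.inl ⟨by linarith, by linarith⟩
    · exact Or.inr ⟨by linarith, by linarith⟩
  calc ∫⁻ θ in {θ | |θ - φ| ∈ Icc r (r + d)}, ENNReal.ofReal (1 / (θ - φ) ^ 2) ∂ν
      ≤ ∫⁻ _ in {θ | |θ - φ| ∈ Icc r (r + d)}, ENNReal.ofReal (1 / r ^ 2) ∂ν := by
        refine setLIntegral_mono measurable_const fun θ hθ => ?_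
        rw [← sq_abs (θ - φ)]
        gcongr
        exact hθ.1
    _ ≤ ENNReal.ofReal (1 / r ^ 2) * (M + M) := by
        rw [setLIntegral_const]
        gcongr
        exact (measure_mono hcover).trans
          ((measure_union_le _ _).trans (add_le_add (hν _) (hν _)))
    _ = ENNReal.ofReal (2 / r ^ 2) * M := by
        rw [← two_mul, ← mul_assoc, ← ENNReal.ofReal_ofNat 2,
          ← ENNReal.ofReal_mul (by positivity), one_div_mul_eq_div]

/- The constant `π ^ 2 / 3` is `2 * ∑ 1 / (n + 1) ^ 2`. -/
lemma setLIntegral_one_div_sq_le (hd : 0 < d) (hν : ∀ a, ν (Icc a (a + d)) ≤ M) (φ : ℝ) :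
    ∫⁻ θ in {θ | d ≤ |θ - φ|}, ENNReal.ofReal (1 / (θ - φ) ^ 2) ∂ν ≤
      ENNReal.ofReal (π ^ 2 / 3 / d ^ 2) * M := by
  set r : ℕ → ℝ := fun n => ((n + 1 : ℕ) : ℝ) * d
  have hcover : {θ | d ≤ |θ - φ|} ⊆ ⋃ n, {θ | |θ - φ| ∈ Icc (r n) (r n + d)} := by
    intro θ hθ
    obtain ⟨n, hn⟩ : ∃ n, ⌊|θ - φ| / d⌋₊ = n + 1 :=
      Nat.exists_eq_succ_of_ne_zero (Nat.floor_pos.2 ((one_le_div hd).2 hθ)).ne'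
    obtain ⟨hlow, hupp⟩ := (Nat.floor_eq_iff (by positivity)).1 hn
    refine mem_iUnion.2 ⟨n, (le_div_iff₀ hd).1 hlow, ((div_lt_iff₀ hd).1 hupp).le.trans_eq ?_⟩
    rw [add_one_mul]
  have hzeta : HasSum (fun n : ℕ => 1 / ((n + 1 : ℕ) : ℝ) ^ 2) (π ^ 2 / 6) := by
    simpa using (hasSum_nat_add_iff' 1).2 hasSum_zeta_two
  have hsum : HasSum (fun n => 2 / r n ^ 2) (π ^ 2 / 3 / d ^ 2) := by
    have hterm : ∀ n, 2 / r n ^ 2 = 2 / d ^ 2 * (1 / ((n + 1 : ℕ) : ℝ) ^ 2) := fun n => by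
      simp only [r]
      field_simp
    have htotal : π ^ 2 / 3 / d ^ 2 = 2 / d ^ 2 * (π ^ 2 / 6) := by ring
    simp_rw [hterm, htotal]
    exact hzeta.mul_left _
  calc ∫⁻ θ in {θ | d ≤ |θ - φ|}, ENNReal.ofReal (1 / (θ - φ) ^ 2) ∂ν
      ≤ ∑' n, ∫⁻ θ in {θ | |θ - φ| ∈ Icc (r n) (r n + d)},
          ENNReal.ofReal (1 / (θ - φ) ^ 2) ∂ν :=
        (lintegral_mono_set hcover).trans (lintegral_iUnion_le _ _)
    _ ≤ ∑' n, ENNReal.ofReal (2 / r n ^ 2) * M :=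
        ENNReal.tsum_le_tsum fun n => setLIntegral_shell_one_div_sq_le hν φ (by positivity)
    _ = ENNReal.ofReal (π ^ 2 / 3 / d ^ 2) * M := by
        rw [ENNReal.tsum_mul_right,
          ← ENNReal.ofReal_tsum_of_nonneg (fun n => by positivity) hsum.summable, hsum.tsum_eq]

theorem PorousUpTo.exists_setLIntegral_abs_log_pow_div_sq_le {h : ℝ → ℝ} {c L : ℝ}
    (hpor : PorousUpTo h c L) (hlip : LipschitzWith 1 h) (hc : 0 < c) (h₀ : ∀ θ, 0 ≤ h θ)
    (n : ℕ) :
    ∃ K > 0, ∀ φ d, 0 < d → d ≤ L →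
      ∫⁻ θ in {θ | d ≤ |θ - φ|} ∩ {θ | h θ ≤ d},
        ENNReal.ofReal (|Real.log (d / h θ)| ^ n / (θ - φ) ^ 2) ≤ ENNReal.ofReal (K / d) := by
  obtain ⟨K, hK, hlocal⟩ := hpor.exists_setLIntegral_Icc_abs_log_pow_le hlip hc h₀ n
  refine ⟨π ^ 2 / 3 * K, by positivity, fun φ d hd hdL => ?_⟩
  have hmeas : Measurable h := hlip.continuous.measurable
  set g : ℝ → ENNReal := fun θ => ENNReal.ofReal (|Real.log (d / h θ)| ^ n)
  have hg : Measurable g := by fun_prop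
  set ν : Measure ℝ := (volume.restrict {θ | h θ ≤ d}).withDensity g
  have hfar : MeasurableSet {θ : ℝ | d ≤ |θ - φ|} := measurableSet_le (by fun_prop) (by fun_prop)
  have hν : ∀ a, ν (Icc a (a + d)) ≤ ENNReal.ofReal (K * d) := by
    intro a
    rw [withDensity_apply _ measurableSet_Icc, Measure.restrict_restrict measurableSet_Icc]
    exact hlocal a d hd hdL
  calc ∫⁻ θ in {θ | d ≤ |θ - φ|} ∩ {θ | h θ ≤ d},
        ENNReal.ofReal (|Real.log (d / h θ)| ^ n / (θ - φ) ^ 2)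
      = ∫⁻ θ in {θ | d ≤ |θ - φ|}, ENNReal.ofReal (1 / (θ - φ) ^ 2) ∂ν := by
        rw [setLIntegral_withDensity_eq_setLIntegral_mul _ hg (by fun_prop) hfar,
          Measure.restrict_restrict hfar]
        refine lintegral_congr fun θ => ?_
        rw [Pi.mul_apply, ← ENNReal.ofReal_mul (by positivity), mul_one_div]
    _ ≤ ENNReal.ofReal (π ^ 2 / 3 / d ^ 2) * ENNReal.ofReal (K * d) :=
        setLIntegral_one_div_sq_le hd hν φ
    _ = ENNReal.ofReal (π ^ 2 / 3 * K / d) := by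
        rw [← ENNReal.ofReal_mul (by positivity)]
        congr 1
        field_simp

end Tail

section Circle

lemma cpt_mem_circleT (θ : ℝ) : cpt θ ∈ circleT := by
  simp [circleT, cpt, Complex.norm_exp_ofReal_mul_I]

lemma continuous_cpt : Continuous cpt := by
  unfold cpt
  fun_prop

lemma cpt_periodic : Function.Periodic cpt (2 * π) := fun θ => by
  simpa [cpt] using Complex.exp_mul_I_periodic θ

lemma norm_cpt_sub_cpt (a b : ℝ) :
    ‖cpt a - cpt b‖ = ‖Complex.exp (Complex.I * (a - b : ℝ)) - 1‖ := by
  have hfactor : cpt a - cpt b = cpt b * (Complex.exp (Complex.I * (a - b : ℝ)) - 1) := by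
    simp only [cpt, mul_sub, ← Complex.exp_add, mul_one]
    congr 2
    push_cast
    ring
  rw [hfactor, norm_mul, cpt, Complex.norm_exp_ofReal_mul_I, one_mul]

lemma lipschitzWith_cpt : LipschitzWith 1 cpt := LipschitzWith.mk_one fun a b => by
  rw [dist_eq_norm, norm_cpt_sub_cpt, Real.dist_eq]
  exact Real.norm_exp_I_mul_ofReal_sub_one_le

lemma mul_abs_sub_le_norm_cpt_sub_cpt {a b : ℝ} (hab : |a - b| ≤ π) :
    2 / π * |a - b| ≤ ‖cpt a - cpt b‖ := by
  have habs : |(a - b) / 2| = |a - b| / 2 := by rw [abs_div, abs_two]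
  have hsin := Real.mul_abs_le_abs_sin (x := (a - b) / 2) (by linarith)
  rw [norm_cpt_sub_cpt, Complex.norm_exp_I_mul_ofReal_sub_one, norm_mul, Real.norm_eq_abs,
    Real.norm_eq_abs, abs_two]
  rw [habs] at hsin
  linarith

lemma one_div_norm_cpt_sub_cpt_sq_le {a b : ℝ} (hne : a ≠ b) (hab : |a - b| ≤ π) :
    1 / ‖cpt a - cpt b‖ ^ 2 ≤ π ^ 2 / 4 * (1 / (a - b) ^ 2) := by
  have hlow : 0 < 2 / π * |a - b| := mul_pos (by positivity) (abs_pos.2 (sub_ne_zero.2 hne))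
  calc 1 / ‖cpt a - cpt b‖ ^ 2 ≤ 1 / (2 / π * |a - b|) ^ 2 :=
        one_div_le_one_div_of_le (pow_pos hlow 2)
          (pow_le_pow_left₀ hlow.le (mul_abs_sub_le_norm_cpt_sub_cpt hab) 2)
    _ = π ^ 2 / 4 * (1 / (a - b) ^ 2) := by
        rw [mul_pow, sq_abs, div_pow, one_div, mul_inv, inv_div]
        ring

lemma exists_cpt_eq {ζ : ℂ} (hζ : ζ ∈ circleT) : ∃ φ ∈ Ioc (-π) π, cpt φ = ζ := by
  refine ⟨ζ.arg, Complex.arg_mem_Ioc ζ, ?_⟩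
  have hnorm : ‖ζ‖ = 1 := by simpa [circleT] using hζ
  simpa [cpt, hnorm] using Complex.norm_mul_exp_arg_mul_I ζ

lemma circIntOn_le_two_mul {Λ : Set ℂ} {f : ℂ → ℝ} {ζ : ℂ} {A : ℝ} (hf : ∀ z, 0 ≤ f z)
    (hζ : ζ ∈ circleT) (hA : 0 ≤ A)
    (hhalf : ∀ φ, cpt φ = ζ →
      ∫⁻ θ in {θ | cpt θ ∈ Λ ∧ |θ - φ| ≤ π}, ENNReal.ofReal (f (cpt θ)) ≤ ENNReal.ofReal A) :
    circIntOn Λ f ≤ 2 * A := by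
  obtain ⟨φ, hφ, hφζ⟩ := exists_cpt_eq hζ
  have hcover : {θ ∈ Ioc 0 (2 * π) | cpt θ ∈ Λ} ⊆
      {θ | cpt θ ∈ Λ ∧ |θ - φ| ≤ π} ∪ {θ | cpt θ ∈ Λ ∧ |θ - (φ + 2 * π)| ≤ π} := by
    rintro θ ⟨hθ, hΛ⟩
    rcases le_or_gt (θ - φ) π with hle | hgt
    · exact Or.inl ⟨hΛ, abs_le.2 ⟨by linarith [hθ.1, hφ.2], hle⟩⟩
    · exact Or.inr ⟨hΛ, abs_le.2 ⟨by linarith, by linarith [hθ.2, hφ.1]⟩⟩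
  refine (Real.le_norm_self _).trans ((norm_integral_le_lintegral_norm _).trans
    (ENNReal.toReal_le_of_le_ofReal (mul_nonneg two_pos.le hA) ?_))
  simp_rw [Real.norm_of_nonneg (hf _)]
  calc ∫⁻ θ in {θ ∈ Ioc 0 (2 * π) | cpt θ ∈ Λ}, ENNReal.ofReal (f (cpt θ))
      ≤ (∫⁻ θ in {θ | cpt θ ∈ Λ ∧ |θ - φ| ≤ π}, ENNReal.ofReal (f (cpt θ))) +
          ∫⁻ θ in {θ | cpt θ ∈ Λ ∧ |θ - (φ + 2 * π)| ≤ π}, ENNReal.ofReal (f (cpt θ)) :=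
        (lintegral_mono_set hcover).trans (lintegral_union_le _ _ _)
    _ ≤ ENNReal.ofReal A + ENNReal.ofReal A :=
        add_le_add (hhalf φ hφζ) (hhalf (φ + 2 * π) ((cpt_periodic φ).trans hφζ))
    _ = ENNReal.ofReal (2 * A) := by rw [← ENNReal.ofReal_add hA hA, two_mul]

end Circle

section DistanceOnCircle

variable {E : Set ℂ}

lemma dE_nonneg (ζ : ℂ) : 0 ≤ dE E ζ := Metric.infDist_nonneg

lemma lipschitzWith_dE_cpt : LipschitzWith 1 fun θ => dE E (cpt θ) := by
  rw [← mul_one (1 : NNReal)]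
  exact (Metric.lipschitz_infDist_pt E).comp lipschitzWith_cpt

lemma cpt_mem_compArc {φ θ : ℝ} (hθ : |θ - φ| < dE E (cpt φ)) :
    cpt θ ∈ compArc E (cpt φ) := by
  have hpos : 0 < dE E (cpt φ) := (abs_nonneg _).trans_lt hθ
  have hpre : IsPreconnected (cpt '' Metric.ball φ (dE E (cpt φ))) :=
    (convex_ball φ _).isPreconnected.image _ continuous_cpt.continuousOn
  refine hpre.subset_connectedComponentIn ⟨φ, Metric.mem_ball_self hpos, rfl⟩ ?_
    (mem_image_of_mem cpt (Metric.mem_ball.2 hθ))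
  rintro _ ⟨t, ht, rfl⟩
  refine ⟨cpt_mem_circleT t, fun htE => ?_⟩
  have hclose : dist (cpt φ) (cpt t) ≤ dist φ t := by
    simpa using lipschitzWith_cpt.dist_le_mul φ t
  exact ((Metric.infDist_le_dist_of_mem htE).trans hclose).not_gt (Metric.mem_ball'.1 ht)

lemma le_abs_sub_of_cpt_mem_gammaSet {φ θ : ℝ} (hθ : cpt θ ∈ GammaSet E (cpt φ)) :
    dE E (cpt φ) ≤ |θ - φ| :=
  not_lt.1 fun hlt => hθ.1.2 (cpt_mem_compArc hlt)

lemma KSet.exists_porousUpTo (hK : KSet E) :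
    ∃ c > 0, PorousUpTo (fun θ => dE E (cpt θ)) c (2 * π) := by
  obtain ⟨c, hc, harc⟩ := hK
  refine ⟨c / 2, by positivity, fun a l hl hlπ => ?_⟩
  have hsup : c * l ≤ arcSup E a (a + l) := by
    simpa using harc a (a + l) (by linarith) (by linarith)
  have hlt : c / 2 * l < arcSup E a (a + l) := by nlinarith [mul_pos hc hl]
  obtain ⟨_, ⟨θ, hθ, rfl⟩, hθlt⟩ :=
    exists_lt_of_lt_csSup ((nonempty_Ioc.2 (by linarith)).image _) hlt
  exact ⟨θ, Ioc_subset_Icc_self hθ, hθlt.le⟩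

/- Only `infDist ζ ∅ = 0` excludes the empty set. -/
lemma KSet.nonempty (hK : KSet E) : E.Nonempty := by
  obtain ⟨c, hc, hpor⟩ := hK.exists_porousUpTo
  obtain ⟨θ, -, hθ⟩ := hpor 0 1 one_pos (by linarith [Real.pi_gt_three])
  by_contra hempty
  simp only [not_nonempty_iff_eq_empty.1 hempty, dE, Metric.infDist_empty] at hθ
  linarith

lemma KSet.exists_setLIntegral_gammaSet_le (hK : KSet E) (n : ℕ) :
    ∃ A > 0, ∀ φ, 0 < dE E (cpt φ) →
      ∫⁻ θ in {θ | cpt θ ∈ GammaSet E (cpt φ) ∧ |θ - φ| ≤ π}, ENNReal.ofReal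
        (|Real.log (dE E (cpt φ) / dE E (cpt θ))| ^ n / ‖cpt φ - cpt θ‖ ^ 2) ≤
      ENNReal.ofReal (A / dE E (cpt φ)) := by
  obtain ⟨c, hc, hpor⟩ := hK.exists_porousUpTo
  obtain ⟨K, hK₀, hline⟩ := hpor.exists_setLIntegral_abs_log_pow_div_sq_le lipschitzWith_dE_cpt hc
    (fun θ => dE_nonneg _) n
  refine ⟨π ^ 2 / 4 * K, by positivity, fun φ hd => ?_⟩
  set d := dE E (cpt φ)
  set S : Set ℝ := {θ | cpt θ ∈ GammaSet E (cpt φ) ∧ |θ - φ| ≤ π}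
  rcases lt_or_ge π d with hπd | hdπ
  · have hS : S = ∅ := eq_empty_of_forall_notMem fun θ hθ =>
      (hπd.trans_le (le_abs_sub_of_cpt_mem_gammaSet hθ.1)).not_ge hθ.2
    simp [hS]
  set F : ℝ → ℝ := fun θ => |Real.log (d / dE E (cpt θ))| ^ n / (θ - φ) ^ 2
  have hchord : ∀ θ ∈ S, |Real.log (d / dE E (cpt θ))| ^ n / ‖cpt φ - cpt θ‖ ^ 2 ≤
      π ^ 2 / 4 * F θ := by
    intro θ hθ
    have hne : θ ≠ φ :=
      sub_ne_zero.1 (abs_pos.1 (hd.trans_le (le_abs_sub_of_cpt_mem_gammaSet hθ.1)))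
    have hinv := one_div_norm_cpt_sub_cpt_sq_le hne hθ.2
    rw [norm_sub_rev] at hinv
    simp only [F]
    rw [div_eq_mul_one_div, div_eq_mul_one_div _ ((θ - φ) ^ 2), mul_left_comm]
    gcongr
  have hmeas : Measurable fun θ => dE E (cpt θ) := lipschitzWith_dE_cpt.continuous.measurable
  calc ∫⁻ θ in S, ENNReal.ofReal (|Real.log (d / dE E (cpt θ))| ^ n / ‖cpt φ - cpt θ‖ ^ 2)
      ≤ ∫⁻ θ in S, ENNReal.ofReal (π ^ 2 / 4) * ENNReal.ofReal (F θ) := by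
        refine setLIntegral_mono (by fun_prop) fun θ hθ => ?_
        rw [← ENNReal.ofReal_mul (by positivity)]
        exact ENNReal.ofReal_le_ofReal (hchord θ hθ)
    _ = ENNReal.ofReal (π ^ 2 / 4) * ∫⁻ θ in S, ENNReal.ofReal (F θ) :=
        lintegral_const_mul' _ _ ENNReal.ofReal_ne_top
    _ ≤ ENNReal.ofReal (π ^ 2 / 4) * ENNReal.ofReal (K / d) := by
        gcongr
        refine le_trans (lintegral_mono_set fun θ hθ => ?_) (hline φ d hd (by linarith))
        exact ⟨le_abs_sub_of_cpt_mem_gammaSet hθ.1, hθ.1.2⟩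
    _ = ENNReal.ofReal (π ^ 2 / 4 * K / d) := by
        rw [← ENNReal.ofReal_mul (by positivity), mul_div_assoc]

end DistanceOnCircle

theorem statement7_general {E : Set ℂ} (hEc : IsClosed E) (hK : KSet E) : L2Set E := by
  obtain ⟨A, hA, hhalf⟩ := hK.exists_setLIntegral_gammaSet_le 2
  refine ⟨2 * A, by positivity, fun ζ hζ => ?_⟩
  have hd : 0 < dE E ζ := (hEc.notMem_iff_infDist_pos hK.nonempty).1 hζ.2
  rw [mul_div_assoc]
  refine circIntOn_le_two_mul (fun z => by positivity) hζ.1 (by positivity) ?_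
  rintro φ rfl
  simpa only [sq_abs] using hhalf φ hd

/-- Every `𝒦`-set is an `𝓛₂`-set. -/
theorem statement7 (E : Set ℂ) (hEc : IsClosed E) (hEsub : E ⊆ circleT)
    (hEz : MeasureZeroOnCircle E) (hK : KSet E) : L2Set E :=
  statement7_general hEc hK
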